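/- (Asymptotics of the solution, Theorem 7) Let 0<α<1, β > 0 and λ, μ > 0, and define φ(t) = ∫₀ᵗ τ^{α−1} E_{α,α}(−μ τ^α) (t−τ)^{β−1} E_{α,β}(−λ (t−τ)^α) dτ for t > 0. Then as t → +∞: if α ≠ β then φ(t) = O(t^{β−α−1}), and if α = β then φ(t) = O(t^{−α−1}). -/

import Mathlib

open MeasureTheory Set Filter Asymptotics

/-- The two-parameter Mittag-Leffler function `E_{α,β}(z) = ∑_{k≥0} z^k/Γ(αk+β)`. -/
noncomputable def ml (α β z : ℝ) : ℝ := ∑' k : ℕ, z ^ k / Real.Gamma (α * k + β)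

/-!
Write `g_β(t) = t ^ (β - 1) E_{α,β}(-l t ^ α)` and `f = g_α`. The Volterra equation
`Γ(α) f(t) = t ^ (α - 1) - l ∫₀ᵗ f(s) (t - s) ^ (α - 1) ds` has a nonincreasing scaled kernel, which
forbids a first zero of `f`; hence `f > 0`, and the same equation then gives `∫₀ᵗ f ≤ 1 / l` and
`0 ≤ g_1 = 1 - l ∫₀ᵗ f ≤ 1`.

Decay comes from differentiating Laplace transforms, which turns into the identity
`t g_β(t) = (β - α) g_{β+1}(t) + α (f * g_{β+1-α})(t)`. For `β = α` and `|g_1| ≤ 1` it yields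
`f = O(t⁻¹)`. A convolution is estimated by splitting at `t / 2`, where one of the two factors has
argument at least `t / 2` and its pointwise bound applies, while the other contributes its integral.
With this, `f = O(t⁻¹)` and the identity give `g_β = O(t ^ (β - α - 1))`, and using the identity
once more with `g_1 = O(t ^ (-α))` gives `f = O(t ^ (-α - 1))`. A last splitting bounds `φ`.
-/

open scoped Topology

section GammaAndBeta

lemma rpow_mul_exp_neg_le_Gamma {R y : ℝ} (hR : 0 ≤ R) (hy : 1 ≤ y) :
    R ^ (y - 1) * Real.exp (-R) ≤ Real.Gamma y := by
  have hint := Real.GammaIntegral_convergent (s := y) (by linarith)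
  have hsub : Ioi R ⊆ Ioi 0 := Ioi_subset_Ioi hR
  calc R ^ (y - 1) * Real.exp (-R) = ∫ x in Ioi R, Real.exp (-x) * R ^ (y - 1) := by
        rw [integral_mul_const, integral_exp_neg_Ioi, mul_comm]
    _ ≤ ∫ x in Ioi R, Real.exp (-x) * x ^ (y - 1) := by
        refine setIntegral_mono_on ((integrableOn_exp_neg_Ioi R).mul_const _) (hint.mono_set hsub)
          measurableSet_Ioi fun x hx => ?_
        exact mul_le_mul_of_nonneg_left (Real.rpow_le_rpow hR (le_of_lt hx) (by linarith))
          (Real.exp_pos _).le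
    _ ≤ ∫ x in Ioi 0, Real.exp (-x) * x ^ (y - 1) := by
        refine setIntegral_mono_set hint ?_ hsub.eventuallyLE
        filter_upwards [ae_restrict_mem measurableSet_Ioi] with x hx
        have : (0 : ℝ) < x := hx
        exact mul_nonneg (Real.exp_pos _).le (Real.rpow_nonneg this.le _)
    _ = Real.Gamma y := (Real.Gamma_eq_integral (by linarith)).symm

lemma integral_rpow_mul_sub_rpow {a b t : ℝ} (ha : 0 < a) (hb : 0 < b) (ht : 0 < t) :
    ∫ s in (0 : ℝ)..t, s ^ (a - 1) * (t - s) ^ (b - 1) =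
      t ^ (a + b - 1) * ProbabilityTheory.beta a b := by
  have hbeta : Complex.betaIntegral a b = (ProbabilityTheory.beta a b : ℂ) := by
    rw [Complex.betaIntegral_eq_Gamma_mul_div _ _ (by simpa) (by simpa), ProbabilityTheory.beta,
      ← Complex.ofReal_add]
    simp only [Complex.Gamma_ofReal]
    norm_cast
  have hcomplex := Complex.betaIntegral_scaled (a : ℂ) (b : ℂ) ht
  have hreal : ∫ s in (0 : ℝ)..t, (s : ℂ) ^ ((a : ℂ) - 1) * ((t : ℂ) - s) ^ ((b : ℂ) - 1) =
      ((∫ s in (0 : ℝ)..t, s ^ (a - 1) * (t - s) ^ (b - 1) : ℝ) : ℂ) := by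
    rw [← intervalIntegral.integral_ofReal]
    refine intervalIntegral.integral_congr fun s hs => ?_
    rw [uIcc_of_le ht.le] at hs
    simp only [Complex.ofReal_mul, Complex.ofReal_cpow hs.1,
      Complex.ofReal_cpow (sub_nonneg.2 hs.2), Complex.ofReal_sub, Complex.ofReal_one]
  rw [hreal, hbeta] at hcomplex
  apply Complex.ofReal_injective
  rw [hcomplex, Complex.ofReal_mul, Complex.ofReal_cpow ht.le]
  norm_cast

lemma intervalIntegrable_rpow_mul_sub_rpow {a b t : ℝ} (ha : 0 < a) (hb : 0 < b) (ht : 0 < t) :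
    IntervalIntegrable (fun s => s ^ (a - 1) * (t - s) ^ (b - 1)) volume 0 t := by
  -- A non-integrable function would have integral `0`, but the beta integral is positive.
  by_contra h
  have hpos : 0 < t ^ (a + b - 1) * ProbabilityTheory.beta a b :=
    mul_pos (Real.rpow_pos_of_pos ht _) (ProbabilityTheory.beta_pos ha hb)
  rw [← integral_rpow_mul_sub_rpow ha hb ht, intervalIntegral.integral_undef h] at hpos
  exact hpos.false

end GammaAndBeta

section Series

variable {α β : ℝ}

lemma Gamma_mul_natCast_add_pos (hα : 0 ≤ α) (hβ : 0 < β) (k : ℕ) :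
    0 < Real.Gamma (α * k + β) :=
  Real.Gamma_pos_of_pos (by positivity)

lemma summable_pow_div_Gamma (hα : 0 < α) (β x : ℝ) :
    Summable fun k : ℕ => x ^ k / Real.Gamma (α * k + β) := by
  -- With `2 |x| ≤ R ^ α`, the bound `R ^ (α k + β - 1) ≲ Γ (α k + β)` makes the series geometric.
  obtain ⟨R, hRx, hR⟩ : ∃ R : ℝ, 2 * |x| ≤ R ^ α ∧ 1 ≤ R :=
    (((tendsto_rpow_atTop hα).eventually_ge_atTop (2 * |x|)).and (eventually_ge_atTop 1)).exists
  have hR0 : 0 < R := by linarith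
  refine Summable.of_norm_bounded_eventually_nat
    (summable_geometric_two.mul_left (Real.exp R * R ^ (1 - β))) ?_
  have hlarge : ∀ᶠ k : ℕ in atTop, 1 - β ≤ α * k :=
    (tendsto_natCast_atTop_atTop.const_mul_atTop hα).eventually_ge_atTop _
  filter_upwards [hlarge] with k hk
  have hΓ : (R ^ α) ^ k * R ^ (β - 1) * Real.exp (-R) ≤ Real.Gamma (α * k + β) := by
    rw [← Real.rpow_natCast, ← Real.rpow_mul hR0.le, ← Real.rpow_add hR0, ← add_sub_assoc]
    exact rpow_mul_exp_neg_le_Gamma hR0.le (by linarith)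
  have hΓpos : 0 < Real.Gamma (α * k + β) := Real.Gamma_pos_of_pos (by linarith)
  rw [norm_div, norm_pow, Real.norm_eq_abs, Real.norm_of_nonneg hΓpos.le, div_le_iff₀ hΓpos]
  have hcancel : R ^ (1 - β) * R ^ (β - 1) = 1 := by
    rw [← Real.rpow_add hR0, sub_add_sub_cancel, sub_self, Real.rpow_zero]
  have hexp : Real.exp R * Real.exp (-R) = 1 := by
    rw [← Real.exp_add, add_neg_cancel, Real.exp_zero]
  calc |x| ^ k ≤ (1 / 2 * R ^ α) ^ k := pow_le_pow_left₀ (abs_nonneg x) (by linarith) k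
    _ = (Real.exp R * Real.exp (-R)) * (R ^ (1 - β) * R ^ (β - 1)) *
          ((1 / 2) ^ k * (R ^ α) ^ k) := by
        rw [hexp, hcancel, mul_pow]; ring
    _ = Real.exp R * R ^ (1 - β) * (1 / 2) ^ k * ((R ^ α) ^ k * R ^ (β - 1) * Real.exp (-R)) := by
        ring
    _ ≤ _ := by gcongr

lemma continuous_ml (hα : 0 < α) (β : ℝ) : Continuous (ml α β) := by
  refine continuous_iff_continuousAt.2 fun x => ?_
  have hx : Metric.ball 0 (|x| + 1) ∈ 𝓝 x := Metric.isOpen_ball.mem_nhds (by simp)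
  refine ContinuousOn.continuousAt (continuousOn_tsum (fun k => by fun_prop)
    (summable_pow_div_Gamma hα β (|x| + 1)).norm fun k y hy => ?_) hx
  rw [mem_ball_zero_iff] at hy
  rw [norm_div, norm_div, norm_pow, norm_pow, Real.norm_of_nonneg (by positivity : 0 ≤ |x| + 1)]
  gcongr

lemma ml_eq_add_mul_ml (hα : 0 < α) (β z : ℝ) :
    ml α β z = 1 / Real.Gamma β + z * ml α (β + α) z := by
  rw [ml, (summable_pow_div_Gamma hα β z).tsum_eq_zero_add, ml, ← tsum_mul_left]
  congr 1
  · simp only [pow_zero, Nat.cast_zero, mul_zero, zero_add]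
  · refine tsum_congr fun k => ?_
    rw [pow_succ', mul_div_assoc, Nat.cast_succ]
    ring_nf

lemma hasSum_prod_add_of_hasSum_succ_mul {d : ℕ → ℝ} {S : ℝ}
    (hd : HasSum (fun n : ℕ => (n + 1) * d n) S) :
    HasSum (fun p : ℕ × ℕ => d (p.1 + p.2)) S := by
  rw [← Finset.HasAntidiagonal.sigmaAntidiagonalEquivProd.hasSum_iff]
  have hdiag : (fun p : ℕ × ℕ => d (p.1 + p.2)) ∘
      Finset.HasAntidiagonal.sigmaAntidiagonalEquivProd =
      fun p : Σ n : ℕ, Finset.HasAntidiagonal.antidiagonal n => d p.1 :=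
    funext fun p => congrArg d (Finset.HasAntidiagonal.mem_antidiagonal.1 p.2.2)
  have hfiber (c : ℕ → ℝ) (n : ℕ) :
      ∑ _p : Finset.HasAntidiagonal.antidiagonal n, c n = (n + 1) * c n := by simp
  rw [hdiag]
  have hsummable : Summable fun p : Σ n : ℕ, Finset.HasAntidiagonal.antidiagonal n => d p.1 := by
    refine Summable.of_norm ((summable_sigma_of_nonneg fun p => norm_nonneg _).2
      ⟨fun n => Summable.of_finite, ?_⟩)
    refine hd.summable.norm.congr fun n => ?_
    rw [tsum_fintype, hfiber (fun n => ‖d n‖), norm_mul, Real.norm_of_nonneg (by positivity)]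
  have hsigma := hsummable.hasSum.sigma fun n => hasSum_fintype _
  simp only [hfiber d] at hsigma
  exact hsigma.unique hd ▸ hsummable.hasSum

end Series

/-- The kernel `t ^ (β - 1) E_{α,β}(-l t ^ α)` of fractional relaxation, whose Laplace transform is
`s ^ (α - β) / (s ^ α + l)`. Both factors of the convolution `φ` are of this form. -/
noncomputable def mlKernel (α β l t : ℝ) : ℝ := t ^ (β - 1) * ml α β (-l * t ^ α)

section Kernel

variable {α β γ t : ℝ}

lemma continuous_ml_mul_rpow (hα : 0 < α) (β l : ℝ) :
    Continuous fun t : ℝ => ml α β (-l * t ^ α) :=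
  (continuous_ml hα β).comp (continuous_const.mul (Real.continuous_rpow_const hα.le))

lemma hasSum_mlKernel (hα : 0 < α) (β l : ℝ) (ht : 0 < t) :
    HasSum (fun k : ℕ => (-l) ^ k / Real.Gamma (α * k + β) * t ^ (α * k + β - 1))
      (mlKernel α β l t) := by
  refine ((summable_pow_div_Gamma hα β (-l * t ^ α)).hasSum.mul_left (t ^ (β - 1))).congr_fun
    fun k => ?_
  rw [add_sub_assoc, Real.rpow_add ht, Real.rpow_mul ht.le, Real.rpow_natCast, mul_pow]
  ring

lemma mlKernel_eq_sub (hα : 0 < α) (β l : ℝ) (ht : 0 < t) :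
    mlKernel α β l t = t ^ (β - 1) / Real.Gamma β - l * mlKernel α (β + α) l t := by
  rw [mlKernel, mlKernel, ml_eq_add_mul_ml hα, add_sub_right_comm, Real.rpow_add ht]
  ring

lemma intervalIntegrable_mlKernel_mul (hα : 0 < α) (l : ℝ) {G : ℝ → ℝ} {a b : ℝ}
    (hG : IntervalIntegrable (fun s => s ^ (β - 1) * G s) volume a b) :
    IntervalIntegrable (fun s => mlKernel α β l s * G s) volume a b :=
  (hG.continuousOn_mul (continuous_ml_mul_rpow hα β l).continuousOn).congr fun s _ => by
    simp only [mlKernel]; ring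

lemma intervalIntegrable_mlKernel (hα : 0 < α) (hβ : 0 < β) (l a b : ℝ) :
    IntervalIntegrable (mlKernel α β l) volume a b :=
  (intervalIntegral.intervalIntegrable_rpow' (by linarith)).mul_continuousOn
    (continuous_ml_mul_rpow hα β l).continuousOn

lemma intervalIntegrable_mlKernel_mul_sub_rpow (hα : 0 < α) (hβ : 0 < β) (hγ : 0 < γ) (l : ℝ)
    (ht : 0 < t) : IntervalIntegrable (fun s => mlKernel α β l s * (t - s) ^ (γ - 1)) volume 0 t :=
  intervalIntegrable_mlKernel_mul hα l (intervalIntegrable_rpow_mul_sub_rpow hβ hγ ht)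

lemma intervalIntegrable_rpow_mul_mlKernel_sub (hα : 0 < α) (hβ : 0 < β) (hγ : 0 < γ) (l : ℝ)
    (ht : 0 < t) : IntervalIntegrable (fun s => s ^ (β - 1) * mlKernel α γ l (t - s)) volume 0 t :=
  ((intervalIntegrable_rpow_mul_sub_rpow hβ hγ ht).mul_continuousOn
    ((continuous_ml_mul_rpow hα γ l).comp (continuous_sub_left t)).continuousOn).congr fun s _ => by
      simp only [mlKernel, Function.comp_apply]; ring

lemma hasSum_integral_mlKernel_mul (hα : 0 < α) (l : ℝ) (ht : 0 < t) {G : ℝ → ℝ}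
    (hG : IntervalIntegrable (fun s => s ^ (β - 1) * G s) volume 0 t) :
    HasSum (fun k : ℕ => (-l) ^ k / Real.Gamma (α * k + β) *
        ∫ s in (0 : ℝ)..t, s ^ (α * k + β - 1) * G s)
      (∫ s in (0 : ℝ)..t, mlKernel α β l s * G s) := by
  simp only [← intervalIntegral.integral_const_mul]
  have hfactor : ∀ k : ℕ, ∀ s ∈ uIoc 0 t,
      (-l) ^ k / Real.Gamma (α * k + β) * (s ^ (α * k + β - 1) * G s) =
        (-l * s ^ α) ^ k / Real.Gamma (α * k + β) * (s ^ (β - 1) * G s) := fun k s hs => by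
    have hs0 : 0 < s := (uIoc_of_le ht.le ▸ hs).1
    rw [add_sub_assoc, Real.rpow_add hs0, Real.rpow_mul hs0.le, Real.rpow_natCast, mul_pow]
    ring
  refine intervalIntegral.hasSum_integral_of_dominated_convergence
    (fun k s => ‖(l * t ^ α) ^ k / Real.Gamma (α * k + β)‖ * ‖s ^ (β - 1) * G s‖) (fun k => ?_)
    (fun k => ?_) ?_ ?_ ?_
  · refine AEStronglyMeasurable.congr ?_
      ((ae_restrict_mem measurableSet_uIoc).mono fun s hs => (hfactor k s hs).symm)
    have hcont : Continuous fun s : ℝ => (-l * s ^ α) ^ k / Real.Gamma (α * k + β) :=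
      ((continuous_const.mul (Real.continuous_rpow_const hα.le)).pow k).div_const _
    exact hcont.aestronglyMeasurable.mul (intervalIntegrable_iff.1 hG).aestronglyMeasurable
  · refine .of_forall fun s hs => ?_
    have hs' := uIoc_of_le ht.le ▸ hs
    have hle : ‖s ^ α‖ ≤ ‖t ^ α‖ := by
      rw [Real.norm_of_nonneg (Real.rpow_nonneg hs'.1.le α),
        Real.norm_of_nonneg (Real.rpow_nonneg ht.le α)]
      exact Real.rpow_le_rpow hs'.1.le hs'.2 hα.le
    rw [hfactor k s hs, norm_mul, norm_div, norm_div, norm_pow, norm_pow, norm_mul (-l),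
      norm_mul l, norm_neg]
    gcongr
  · exact .of_forall fun s _ => (summable_pow_div_Gamma hα β _).norm.mul_right _
  · simp only [tsum_mul_right]
    exact hG.norm.const_mul _
  · refine .of_forall fun s hs => ?_
    have := (hasSum_mlKernel hα β l (uIoc_of_le ht.le ▸ hs).1).mul_right (G s)
    simpa only [mul_assoc] using this

lemma integral_mlKernel_mul_sub_rpow (hα : 0 < α) (hβ : 0 < β) (hγ : 0 < γ) (l : ℝ) (ht : 0 < t) :
    ∫ s in (0 : ℝ)..t, mlKernel α β l s * (t - s) ^ (γ - 1) =
      Real.Gamma γ * mlKernel α (β + γ) l t := by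
  refine (hasSum_integral_mlKernel_mul hα l ht
    (intervalIntegrable_rpow_mul_sub_rpow hβ hγ ht)).unique
    (((hasSum_mlKernel hα (β + γ) l ht).mul_left (Real.Gamma γ)).congr_fun fun k => ?_)
  rw [integral_rpow_mul_sub_rpow (by positivity) hγ ht, ProbabilityTheory.beta, ← add_assoc]
  have := Gamma_mul_natCast_add_pos hα.le hβ k
  field_simp

lemma integral_mlKernel (hα : 0 < α) (hβ : 0 < β) (l : ℝ) (ht : 0 < t) :
    ∫ s in (0 : ℝ)..t, mlKernel α β l s = mlKernel α (β + 1) l t := by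
  simpa using integral_mlKernel_mul_sub_rpow hα hβ one_pos l ht

lemma hasSum_integral_mlKernel_mul_mlKernel (hα : 0 < α) (hβ : 0 < β) (hγ : 0 < γ) (l m : ℝ)
    (ht : 0 < t) :
    HasSum (fun k : ℕ => (-l) ^ k * mlKernel α (α * k + (β + γ)) m t)
      (∫ s in (0 : ℝ)..t, mlKernel α β l s * mlKernel α γ m (t - s)) := by
  refine (hasSum_integral_mlKernel_mul hα l ht
    (intervalIntegrable_rpow_mul_mlKernel_sub hα hβ hγ m ht)).congr_fun fun k => ?_
  have hpow : ∫ s in (0 : ℝ)..t, s ^ (α * k + β - 1) * mlKernel α γ m (t - s) =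
      Real.Gamma (α * k + β) * mlKernel α (α * k + (β + γ)) m t := by
    rw [show α * k + (β + γ) = γ + (α * k + β) by ring,
      ← integral_mlKernel_mul_sub_rpow hα hγ (by positivity) m ht]
    have := intervalIntegral.integral_comp_sub_left (a := 0) (b := t)
      (fun s => mlKernel α γ m s * (t - s) ^ (α * k + β - 1)) t
    simpa only [sub_sub_cancel, sub_self, sub_zero, mul_comm] using this
  have := Gamma_mul_natCast_add_pos hα.le hβ k
  rw [hpow]
  field_simp

lemma integral_mlKernel_mul_mlKernel_eq_of_hasSum (hα : 0 < α) (hβ : 0 < β) (hγ : 0 < γ)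
    {l S : ℝ} (ht : 0 < t)
    (hS : HasSum (fun n : ℕ => (n + 1) *
      ((-l) ^ n / Real.Gamma (α * n + (β + γ)) * t ^ (α * n + (β + γ) - 1))) S) :
    ∫ s in (0 : ℝ)..t, mlKernel α β l s * mlKernel α γ l (t - s) = S := by
  refine (hasSum_integral_mlKernel_mul_mlKernel hα hβ hγ l l ht).unique
    ((hasSum_prod_add_of_hasSum_succ_mul hS).prod_fiberwise fun k => ?_)
  refine ((hasSum_mlKernel hα (α * k + (β + γ)) l ht).mul_left ((-l) ^ k)).congr_fun fun j => ?_
  rw [show α * ↑(k + j) + (β + γ) = α * j + (α * k + (β + γ)) by push_cast; ring, pow_add]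
  ring

/-- On the Laplace side this is `-dĝ/ds = (β - α) ĝ / s + α f̂ ĝ s ^ (α - 1)`, for the transforms
`ĝ = s ^ (α - β) / (s ^ α + l)` and `f̂ = 1 / (s ^ α + l)`. -/
lemma mul_mlKernel_eq (hα : 0 < α) (hβ : 0 < β) (hαβ : α < β + 1) (l : ℝ) (ht : 0 < t) :
    t * mlKernel α β l t = (β - α) * mlKernel α (β + 1) l t +
      α * ∫ s in (0 : ℝ)..t, mlKernel α α l s * mlKernel α (β + 1 - α) l (t - s) := by
  have hsum : HasSum (fun n : ℕ => (n + 1) *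
      ((-l) ^ n / Real.Gamma (α * n + (α + (β + 1 - α))) * t ^ (α * n + (α + (β + 1 - α)) - 1)))
      ((t * mlKernel α β l t - (β - α) * mlKernel α (β + 1) l t) / α) := by
    rw [add_sub_cancel]
    refine ((((hasSum_mlKernel hα β l ht).mul_left t).sub
      ((hasSum_mlKernel hα (β + 1) l ht).mul_left (β - α))).div_const α).congr_fun fun n => ?_
    have hpos : 0 < α * n + β := by positivity
    have := Real.Gamma_pos_of_pos hpos
    rw [← add_assoc, Real.Gamma_add_one hpos.ne', add_sub_cancel_right,
      show t ^ (α * n + β) = t * t ^ (α * n + β - 1) by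
        rw [← Real.rpow_one_add' ht.le (by linarith)]; congr 1; ring]
    field_simp
    ring
  rw [integral_mlKernel_mul_mlKernel_eq_of_hasSum hα hα (by linarith) ht hsum]
  field_simp
  ring

end Kernel

section Positivity

variable {α l t : ℝ}

lemma exists_nonpos_of_le_integral_mul {a b : ℝ} {H K : ℝ → ℝ} (hab : a < b)
    (hH : ContinuousOn H (Icc a b)) (hK : IntervalIntegrable K volume a b)
    (hK_nonneg : ∀ s ∈ Icc a b, 0 ≤ K s)
    (hle : ∀ t ∈ Icc a b, H t ≤ ∫ s in t..b, H s * K s) :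
    ∃ t ∈ Ico a b, H t ≤ 0 := by
  by_contra! hpos
  obtain ⟨c, hc, hKc⟩ : ∃ c ∈ Ico a b, ∫ s in c..b, K s < 1 := by
    have hcont := intervalIntegral.continuousOn_primitive_interval_left
      ((intervalIntegrable_iff' (μ := volume)).1 hK) b right_mem_uIcc
    have hlt : ∀ᶠ c in 𝓝[Icc a b] b, ∫ s in c..b, K s < 1 := by
      rw [uIcc_of_le hab.le] at hcont
      exact hcont.eventually_lt continuousWithinAt_const (by simp)
    have hIco : 𝓝[Ico a b] b ≤ 𝓝[Icc a b] b := nhdsWithin_mono b Ico_subset_Icc_self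
    have : (𝓝[Ico a b] b).NeBot := right_nhdsWithin_Ico_neBot hab
    exact (eventually_mem_nhdsWithin.and (hlt.filter_mono hIco)).exists
  have hcb : Icc c b ⊆ Icc a b := Icc_subset_Icc_left hc.1
  obtain ⟨t, ht, hmax⟩ :=
    isCompact_Icc.exists_isMaxOn (nonempty_Icc.2 hc.2.le) (hH.mono hcb)
  have hHt : 0 < H t := (hpos c hc).trans_le (hmax (left_mem_Icc.2 hc.2.le))
  have hK' : ∀ x ∈ Icc a b, IntervalIntegrable K volume x b := fun x hx =>
    hK.mono_set (by rw [uIcc_of_le hx.2, uIcc_of_le hab.le]; exact Icc_subset_Icc_left hx.1)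
  have htb : Icc t b ⊆ Icc c b := Icc_subset_Icc_left ht.1
  have hself : H t < H t := calc
    H t ≤ ∫ s in t..b, H s * K s := hle t (hcb ht)
    _ ≤ ∫ s in t..b, H t * K s := by
        refine intervalIntegral.integral_mono_on ht.2 ((hK' t (hcb ht)).continuousOn_mul ?_)
          ((hK' t (hcb ht)).const_mul _) fun s hs =>
            mul_le_mul_of_nonneg_right (hmax (htb hs)) (hK_nonneg s (hcb (htb hs)))
        exact hH.mono (by rw [uIcc_of_le ht.2]; exact htb.trans hcb)
    _ = H t * ∫ s in t..b, K s := intervalIntegral.integral_const_mul _ _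
    _ ≤ H t * ∫ s in c..b, K s := by
        refine mul_le_mul_of_nonneg_left (intervalIntegral.integral_mono_interval ht.1 ht.2 le_rfl
          ((ae_restrict_mem measurableSet_Ioc).mono fun s hs => ?_)
          (hK' c (hcb (left_mem_Icc.2 hc.2.le)))) hHt.le
        exact hK_nonneg s (hcb (Ioc_subset_Icc_self hs))
    _ < H t := mul_lt_of_lt_one_right hHt hKc
  exact hself.false

lemma Gamma_mul_ml_self_eq (hα : 0 < α) (l : ℝ) (ht : 0 < t) :
    Real.Gamma α * ml α α (-l * t ^ α) =
      1 - l * (t ^ (1 - α) * ∫ s in (0 : ℝ)..t, mlKernel α α l s * (t - s) ^ (α - 1)) := by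
  have hpow : t ^ (1 - α) * t ^ (α + α - 1) = t ^ α := by
    rw [← Real.rpow_add ht]; congr 1; ring
  have := Real.Gamma_pos_of_pos hα
  rw [integral_mlKernel_mul_sub_rpow hα hα hα l ht, ml_eq_add_mul_ml hα, mlKernel, ← hpow]
  field_simp
  ring

lemma rpow_mul_sub_rpow_le {s t t' : ℝ} (hα1 : α ≤ 1) (hs : 0 ≤ s) (hst : s < t) (htt' : t ≤ t') :
    t' ^ (1 - α) * (t' - s) ^ (α - 1) ≤ t ^ (1 - α) * (t - s) ^ (α - 1) := by
  have hscale : ∀ r, s < r → r ^ (1 - α) * (r - s) ^ (α - 1) = (1 - s / r) ^ (α - 1) := by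
    intro r hr
    have hr0 : 0 < r := hs.trans_lt hr
    rw [one_sub_div hr0.ne', Real.div_rpow (sub_nonneg.2 hr.le) hr0.le, ← neg_sub α 1,
      Real.rpow_neg hr0.le, inv_mul_eq_div]
  have ht : 0 < t := hs.trans_lt hst
  rw [hscale t hst, hscale t' (hst.trans_le htt')]
  refine Real.rpow_le_rpow_of_nonpos (sub_pos.2 ((div_lt_one ht).2 hst)) ?_ (by linarith)
  gcongr

lemma ml_self_le_add_integral {t' : ℝ} (hα : 0 < α) (hα1 : α ≤ 1) (hl : 0 ≤ l) (ht : 0 < t)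
    (htt' : t ≤ t') (hnonneg : ∀ s ∈ Ioo 0 t, 0 ≤ mlKernel α α l s) :
    ml α α (-l * t ^ α) ≤ ml α α (-l * t' ^ α) + l * t' ^ (1 - α) / Real.Gamma α *
      ∫ s in t..t', mlKernel α α l s * (t' - s) ^ (α - 1) := by
  have ht' : 0 < t' := ht.trans_le htt'
  have hΓ := Real.Gamma_pos_of_pos hα
  have hint := intervalIntegrable_mlKernel_mul_sub_rpow hα hα hα l ht'
  have hint_left : IntervalIntegrable (fun s => mlKernel α α l s * (t' - s) ^ (α - 1)) volume 0 t :=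
    hint.mono_set (by rw [uIcc_of_le ht.le, uIcc_of_le ht'.le]; exact Icc_subset_Icc_right htt')
  have hint_right :
      IntervalIntegrable (fun s => mlKernel α α l s * (t' - s) ^ (α - 1)) volume t t' :=
    hint.mono_set (by rw [uIcc_of_le htt', uIcc_of_le ht'.le]; exact Icc_subset_Icc_left ht.le)
  have hleft : t' ^ (1 - α) * ∫ s in (0 : ℝ)..t, mlKernel α α l s * (t' - s) ^ (α - 1) ≤
      t ^ (1 - α) * ∫ s in (0 : ℝ)..t, mlKernel α α l s * (t - s) ^ (α - 1) := by
    simp only [← intervalIntegral.integral_const_mul, mul_left_comm _ (mlKernel α α l _)]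
    refine intervalIntegral.integral_mono_on_of_le_Ioo ht.le ?_ ?_ fun s hs =>
      mul_le_mul_of_nonneg_left (rpow_mul_sub_rpow_le hα1 hs.1.le hs.2 htt') (hnonneg s hs)
    · simpa only [mul_left_comm] using hint_left.const_mul (t' ^ (1 - α))
    · simpa only [mul_left_comm] using
        (intervalIntegrable_mlKernel_mul_sub_rpow hα hα hα l ht).const_mul (t ^ (1 - α))
  have hsplit := intervalIntegral.integral_add_adjacent_intervals hint_left hint_right
  rw [← mul_le_mul_iff_right₀ hΓ, mul_add, Gamma_mul_ml_self_eq hα l ht,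
    Gamma_mul_ml_self_eq hα l ht', ← hsplit, ← mul_assoc (Real.Gamma α), mul_div_cancel₀ _ hΓ.ne']
  linarith [mul_le_mul_of_nonneg_left hleft hl]

/-- At a first zero `t₀` of `ml α α (-l * t ^ α)`, the comparison `ml_self_le_add_integral` with
`t' = t₀` is a Grönwall inequality backwards in time, which forces a zero before `t₀`. -/
lemma ml_self_pos (hα : 0 < α) (hα1 : α ≤ 1) (hl : 0 ≤ l) (ht : 0 ≤ t) :
    0 < ml α α (-l * t ^ α) := by
  by_contra! hneg
  have hcont := continuous_ml_mul_rpow hα α l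
  have hcompact : IsCompact (Icc 0 t ∩ {s | ml α α (-l * s ^ α) ≤ 0}) :=
    isCompact_Icc.inter_right (isClosed_le hcont continuous_const)
  obtain ⟨t₀, ⟨ht₀, hzero⟩, hfirst⟩ := hcompact.exists_isLeast ⟨t, right_mem_Icc.2 ht, hneg⟩
  have hbefore : ∀ s, 0 ≤ s → s < t₀ → 0 < ml α α (-l * s ^ α) := fun s hs hst => by
    by_contra! h
    exact hst.not_ge (hfirst ⟨⟨hs, hst.le.trans ht₀.2⟩, h⟩)
  have ht₀_pos : 0 < t₀ := ht₀.1.lt_of_ne fun h => by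
    have hzero : ml α α (-l * t₀ ^ α) ≤ 0 := hzero
    rw [← h, Real.zero_rpow hα.ne', mul_zero, ml_eq_add_mul_ml hα, zero_mul,
      add_zero] at hzero
    exact (one_div_pos.2 (Real.Gamma_pos_of_pos hα)).not_ge hzero
  set C := l * t₀ ^ (1 - α) / Real.Gamma α
  have hC : 0 ≤ C := div_nonneg (mul_nonneg hl (Real.rpow_nonneg ht₀.1 _))
    (Real.Gamma_pos_of_pos hα).le
  have hK : IntervalIntegrable (fun s => C * (s ^ (α - 1) * (t₀ - s) ^ (α - 1))) volume
      (t₀ / 2) t₀ :=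
    ((intervalIntegrable_rpow_mul_sub_rpow hα hα ht₀_pos).mono_set (by
      rw [uIcc_of_le (by linarith), uIcc_of_le ht₀.1]
      exact Icc_subset_Icc_left (by linarith))).const_mul C
  obtain ⟨s, hs, hs_nonpos⟩ := exists_nonpos_of_le_integral_mul (by linarith) hcont.continuousOn hK
    (fun s hs => mul_nonneg hC (mul_nonneg (Real.rpow_nonneg (by linarith [hs.1]) _)
      (Real.rpow_nonneg (sub_nonneg.2 hs.2) _))) fun s hs => by
        have hcomp := ml_self_le_add_integral hα hα1 hl (by linarith [hs.1]) hs.2 fun r hr =>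
          mul_nonneg (Real.rpow_nonneg hr.1.le _) (hbefore r hr.1.le (hr.2.trans_le hs.2)).le
        refine (hcomp.trans (add_le_of_nonpos_left hzero)).trans_eq ?_
        rw [← intervalIntegral.integral_const_mul]
        congr 1 with r
        rw [mlKernel]
        ring
  exact (hbefore s (by linarith [hs.1]) hs.2).not_ge hs_nonpos

lemma mlKernel_self_pos (hα : 0 < α) (hα1 : α ≤ 1) (hl : 0 ≤ l) (ht : 0 < t) :
    0 < mlKernel α α l t :=
  mul_pos (Real.rpow_pos_of_pos ht _) (ml_self_pos hα hα1 hl ht.le)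

end Positivity

section PowerBounds

variable {f K : ℝ → ℝ} {p q P Q r : ℝ}

lemma isBigO_Ioi_rpow_iff :
    (f =O[𝓟 (Ioi 0)] fun t : ℝ => t ^ p) ↔ ∃ C, 0 ≤ C ∧ ∀ t, 0 < t → |f t| ≤ C * t ^ p := by
  have hnorm : ∀ C, (∀ t ∈ Ioi (0 : ℝ), ‖f t‖ ≤ C * ‖t ^ p‖) ↔ ∀ t, 0 < t → |f t| ≤ C * t ^ p :=
    fun C => forall₂_congr fun t ht => by
      rw [Real.norm_eq_abs, Real.norm_of_nonneg (Real.rpow_nonneg (le_of_lt ht) p)]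
  refine ⟨fun h => ?_, fun ⟨C, _, hC⟩ => isBigO_principal.2 ⟨C, (hnorm C).2 hC⟩⟩
  obtain ⟨C, hC, hfC⟩ := h.exists_nonneg
  exact ⟨C, hC, (hnorm C).1 (isBigOWith_principal.1 hfC)⟩

lemma isBigO_Ioi_rpow_sub_one_of_mul (h : (fun t => t * f t) =O[𝓟 (Ioi 0)] fun t : ℝ => t ^ r) :
    f =O[𝓟 (Ioi 0)] fun t : ℝ => t ^ (r - 1) := by
  obtain ⟨C, hC, hfC⟩ := isBigO_Ioi_rpow_iff.1 h
  refine isBigO_Ioi_rpow_iff.2 ⟨C, hC, fun t ht => ?_⟩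
  rw [Real.rpow_sub_one ht.ne', ← mul_div_assoc, le_div_iff₀' ht]
  simpa only [abs_mul, abs_of_pos ht] using hfC t ht

lemma isBigO_Ioi_integral_abs (hp : -1 < p) (h : f =O[𝓟 (Ioi 0)] fun t : ℝ => t ^ p) :
    (fun t => ∫ s in (0 : ℝ)..t, |f s|) =O[𝓟 (Ioi 0)] fun t : ℝ => t ^ (p + 1) := by
  obtain ⟨C, hC, hfC⟩ := isBigO_Ioi_rpow_iff.1 h
  refine isBigO_Ioi_rpow_iff.2 ⟨C / (p + 1), div_nonneg hC (by linarith), fun t ht => ?_⟩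
  calc ‖∫ s in (0 : ℝ)..t, |f s|‖ ≤ ∫ s in (0 : ℝ)..t, C * s ^ p :=
        intervalIntegral.norm_integral_le_of_norm_le ht.le
          (.of_forall fun s hs => by simpa using hfC s hs.1)
          ((intervalIntegral.intervalIntegrable_rpow' hp).const_mul C)
    _ = C / (p + 1) * t ^ (p + 1) := by
        rw [intervalIntegral.integral_const_mul, integral_rpow (Or.inl hp),
          Real.zero_rpow (by linarith)]
        ring

lemma rpow_le_two_rpow_abs_mul_rpow {s t : ℝ} (ht : 0 < t) (hts : t / 2 ≤ s) (hst : s ≤ t) (p : ℝ) :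
    s ^ p ≤ 2 ^ |p| * t ^ p := by
  rcases le_total 0 p with hp | hp
  · exact (Real.rpow_le_rpow (by linarith) hst hp).trans (le_mul_of_one_le_left
      (Real.rpow_nonneg ht.le p) (Real.one_le_rpow one_le_two (abs_nonneg p)))
  · rw [abs_of_nonpos hp, Real.rpow_neg zero_le_two, inv_mul_eq_div,
      ← Real.div_rpow ht.le zero_le_two]
    exact Real.rpow_le_rpow_of_nonpos (by linarith) hts hp

lemma abs_mul_sub_le {A B s t : ℝ} (hA : 0 ≤ A) (hB : 0 ≤ B)
    (hf : ∀ t, 0 < t → |f t| ≤ A * t ^ p) (hK : ∀ t, 0 < t → |K t| ≤ B * t ^ q)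
    (hs : 0 < s) (hst : s < t) :
    |f s * K (t - s)| ≤
      B * (2 ^ |q| * t ^ q) * |f s| + A * (2 ^ |p| * t ^ p) * |K (t - s)| := by
  have ht : 0 < t := hs.trans hst
  rw [abs_mul]
  rcases le_total s (t / 2) with h | h
  · refine le_add_of_le_of_nonneg ?_ (by positivity)
    rw [mul_comm]
    gcongr
    exact (hK _ (sub_pos.2 hst)).trans (mul_le_mul_of_nonneg_left
      (rpow_le_two_rpow_abs_mul_rpow ht (by linarith) (by linarith) q) hB)
  · refine le_add_of_nonneg_of_le (by positivity) ?_
    gcongr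
    exact (hf s hs).trans (mul_le_mul_of_nonneg_left
      (rpow_le_two_rpow_abs_mul_rpow ht h hst.le p) hA)

lemma isBigO_Ioi_convolution (hf_int : ∀ t, 0 < t → IntervalIntegrable f volume 0 t)
    (hK_int : ∀ t, 0 < t → IntervalIntegrable K volume 0 t)
    (hf : f =O[𝓟 (Ioi 0)] fun t : ℝ => t ^ p)
    (hf_abs : (fun t => ∫ s in (0 : ℝ)..t, |f s|) =O[𝓟 (Ioi 0)] fun t : ℝ => t ^ P)
    (hK : K =O[𝓟 (Ioi 0)] fun t : ℝ => t ^ q)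
    (hK_abs : (fun t => ∫ s in (0 : ℝ)..t, |K s|) =O[𝓟 (Ioi 0)] fun t : ℝ => t ^ Q)
    (hPq : P + q = r) (hpQ : p + Q = r) :
    (fun t => ∫ s in (0 : ℝ)..t, f s * K (t - s)) =O[𝓟 (Ioi 0)] fun t : ℝ => t ^ r := by
  obtain ⟨A, hA, hfA⟩ := isBigO_Ioi_rpow_iff.1 hf
  obtain ⟨B, hB, hKB⟩ := isBigO_Ioi_rpow_iff.1 hK
  obtain ⟨M, hM, hfM⟩ := isBigO_Ioi_rpow_iff.1 hf_abs
  obtain ⟨N, hN, hKN⟩ := isBigO_Ioi_rpow_iff.1 hK_abs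
  refine isBigO_Ioi_rpow_iff.2 ⟨B * 2 ^ |q| * M + A * 2 ^ |p| * N, by positivity, fun t ht => ?_⟩
  have hreflect : ∫ s in (0 : ℝ)..t, |K (t - s)| = ∫ s in (0 : ℝ)..t, |K s| := by
    rw [intervalIntegral.integral_comp_sub_left (fun s => |K s|) t, sub_self, sub_zero]
  have hint_f := (hf_int t ht).abs.const_mul (B * (2 ^ |q| * t ^ q))
  have hint_K : IntervalIntegrable (fun s => A * (2 ^ |p| * t ^ p) * |K (t - s)|) volume 0 t := by
    simpa using ((hK_int t ht).abs.comp_sub_left t).symm.const_mul (A * (2 ^ |p| * t ^ p))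
  have hbound : ∀ᵐ s, s ∈ Ioc 0 t → ‖f s * K (t - s)‖ ≤
      B * (2 ^ |q| * t ^ q) * |f s| + A * (2 ^ |p| * t ^ p) * |K (t - s)| := by
    filter_upwards [Measure.ae_ne volume t] with s hne hs
    exact abs_mul_sub_le hA hB hfA hKB hs.1 (hs.2.lt_of_ne hne)
  calc |∫ s in (0 : ℝ)..t, f s * K (t - s)|
      ≤ ∫ s in (0 : ℝ)..t,
          (B * (2 ^ |q| * t ^ q) * |f s| + A * (2 ^ |p| * t ^ p) * |K (t - s)|) :=
        intervalIntegral.norm_integral_le_of_norm_le ht.le hbound (hint_f.add hint_K)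
    _ = B * (2 ^ |q| * t ^ q) * (∫ s in (0 : ℝ)..t, |f s|) +
          A * (2 ^ |p| * t ^ p) * ∫ s in (0 : ℝ)..t, |K s| := by
        rw [intervalIntegral.integral_add hint_f hint_K, intervalIntegral.integral_const_mul,
          intervalIntegral.integral_const_mul, hreflect]
    _ ≤ B * (2 ^ |q| * t ^ q) * (M * t ^ P) + A * (2 ^ |p| * t ^ p) * (N * t ^ Q) := by
        gcongr
        exacts [(le_abs_self _).trans (hfM t ht), (le_abs_self _).trans (hKN t ht)]
    _ = B * 2 ^ |q| * M * t ^ (P + q) + A * 2 ^ |p| * N * t ^ (p + Q) := by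
        rw [Real.rpow_add ht, Real.rpow_add ht]
        ring
    _ = (B * 2 ^ |q| * M + A * 2 ^ |p| * N) * t ^ r := by
        rw [hPq, hpQ, add_mul]

end PowerBounds

section Decay

variable {α β l t : ℝ}

lemma mul_integral_mlKernel_self_le_one (hα : 0 < α) (hα1 : α ≤ 1) (hl : 0 ≤ l) (ht : 0 < t) :
    l * ∫ s in (0 : ℝ)..t, mlKernel α α l s ≤ 1 := by
  have hint := intervalIntegrable_mlKernel_mul_sub_rpow hα hα hα l ht
  have hle : ∫ s in (0 : ℝ)..t, mlKernel α α l s ≤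
      t ^ (1 - α) * ∫ s in (0 : ℝ)..t, mlKernel α α l s * (t - s) ^ (α - 1) := by
    rw [← intervalIntegral.integral_const_mul]
    refine intervalIntegral.integral_mono_on_of_le_Ioo ht.le
      (intervalIntegrable_mlKernel hα hα l 0 t) (hint.const_mul _) fun s hs => ?_
    have hone : 1 ≤ t ^ (1 - α) * (t - s) ^ (α - 1) := calc
      1 = t ^ (1 - α) * t ^ (α - 1) := by
        rw [← Real.rpow_add ht, sub_add_sub_cancel, sub_self, Real.rpow_zero]
      _ ≤ t ^ (1 - α) * (t - s) ^ (α - 1) := mul_le_mul_of_nonneg_left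
        (Real.rpow_le_rpow_of_nonpos (sub_pos.2 hs.2) (by linarith [hs.1]) (by linarith))
        (Real.rpow_nonneg ht.le _)
    rw [mul_left_comm]
    exact le_mul_of_one_le_right (mlKernel_self_pos hα hα1 hl hs.1).le hone
  have hpos := mul_pos (Real.Gamma_pos_of_pos hα) (ml_self_pos hα hα1 hl ht.le)
  rw [Gamma_mul_ml_self_eq hα l ht] at hpos
  linarith [mul_le_mul_of_nonneg_left hle hl]

lemma mlKernel_one_eq (hα : 0 < α) (l : ℝ) (ht : 0 < t) :
    mlKernel α 1 l t = 1 - l * ∫ s in (0 : ℝ)..t, mlKernel α α l s := by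
  rw [integral_mlKernel hα hα l ht, mlKernel_eq_sub hα 1 l ht, sub_self, Real.rpow_zero,
    Real.Gamma_one, div_one, add_comm]

lemma mlKernel_one_nonneg (hα : 0 < α) (hα1 : α ≤ 1) (hl : 0 ≤ l) (ht : 0 < t) :
    0 ≤ mlKernel α 1 l t := by
  rw [mlKernel_one_eq hα l ht]
  exact sub_nonneg.2 (mul_integral_mlKernel_self_le_one hα hα1 hl ht)

lemma mlKernel_one_le_one (hα : 0 < α) (hα1 : α ≤ 1) (hl : 0 ≤ l) (ht : 0 < t) :
    mlKernel α 1 l t ≤ 1 := by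
  rw [mlKernel_one_eq hα l ht]
  exact sub_le_self _ (mul_nonneg hl (intervalIntegral.integral_nonneg ht.le fun s hs =>
    mul_nonneg (Real.rpow_nonneg hs.1 _) (ml_self_pos hα hα1 hl hs.1).le))

lemma mul_mlKernel_self_eq (hα : 0 < α) (l : ℝ) (ht : 0 < t) :
    t * mlKernel α α l t = α * ∫ s in (0 : ℝ)..t, mlKernel α α l s * mlKernel α 1 l (t - s) := by
  rw [mul_mlKernel_eq hα hα (lt_add_one α) l ht, sub_self, zero_mul, zero_add,
    add_sub_cancel_left]

lemma isBigO_integral_abs_mlKernel_self (hα : 0 < α) (hα1 : α ≤ 1) (hl : 0 < l) :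
    (fun t => ∫ s in (0 : ℝ)..t, |mlKernel α α l s|) =O[𝓟 (Ioi 0)] fun t : ℝ => t ^ (0 : ℝ) := by
  refine isBigO_Ioi_rpow_iff.2 ⟨1 / l, by positivity, fun t ht => ?_⟩
  have habs : ∫ s in (0 : ℝ)..t, |mlKernel α α l s| = ∫ s in (0 : ℝ)..t, mlKernel α α l s :=
    intervalIntegral.integral_congr_Ioo_of_le ht.le fun s hs =>
      abs_of_pos (mlKernel_self_pos hα hα1 hl.le hs.1)
  rw [abs_of_nonneg (intervalIntegral.integral_nonneg ht.le fun s _ => abs_nonneg _), habs,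
    Real.rpow_zero, mul_one, le_div_iff₀' hl]
  exact mul_integral_mlKernel_self_le_one hα hα1 hl.le ht

lemma mlKernel_self_isBigO_rpow_neg_one (hα : 0 < α) (hα1 : α ≤ 1) (hl : 0 < l) :
    mlKernel α α l =O[𝓟 (Ioi 0)] fun t : ℝ => t ^ (-1 : ℝ) := by
  rw [← zero_sub]
  refine isBigO_Ioi_rpow_sub_one_of_mul (isBigO_Ioi_rpow_iff.2
    ⟨α * (1 / l), by positivity, fun t ht => ?_⟩)
  have hle : ∫ s in (0 : ℝ)..t, mlKernel α α l s * mlKernel α 1 l (t - s) ≤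
      ∫ s in (0 : ℝ)..t, mlKernel α α l s :=
    intervalIntegral.integral_mono_on_of_le_Ioo ht.le
      (intervalIntegrable_mlKernel_mul hα l
        (intervalIntegrable_rpow_mul_mlKernel_sub hα hα one_pos l ht))
      (intervalIntegrable_mlKernel hα hα l 0 t) fun s hs =>
        mul_le_of_le_one_right (mlKernel_self_pos hα hα1 hl.le hs.1).le
          (mlKernel_one_le_one hα hα1 hl.le (sub_pos.2 hs.2))
  rw [abs_of_pos (mul_pos ht (mlKernel_self_pos hα hα1 hl.le ht)), mul_mlKernel_self_eq hα l ht,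
    Real.rpow_zero, mul_one]
  gcongr
  exact hle.trans ((le_div_iff₀' hl).2 (mul_integral_mlKernel_self_le_one hα hα1 hl.le ht))

lemma isBigO_integral_mlKernel_self_mul {K : ℝ → ℝ} {q : ℝ} (hα : 0 < α) (hα1 : α ≤ 1)
    (hl : 0 < l) (hK_int : ∀ t, 0 < t → IntervalIntegrable K volume 0 t) (hq : -1 < q)
    (hK : K =O[𝓟 (Ioi 0)] fun t : ℝ => t ^ q) :
    (fun t => ∫ s in (0 : ℝ)..t, mlKernel α α l s * K (t - s)) =O[𝓟 (Ioi 0)]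
      fun t : ℝ => t ^ q :=
  isBigO_Ioi_convolution (fun t _ => intervalIntegrable_mlKernel hα hα l 0 t) hK_int
    (mlKernel_self_isBigO_rpow_neg_one hα hα1 hl) (isBigO_integral_abs_mlKernel_self hα hα1 hl)
    hK (isBigO_Ioi_integral_abs hq hK) (zero_add q) (neg_add_cancel_comm_assoc 1 q)

lemma mlKernel_add_isBigO_rpow_sub_one (hα : 0 < α) (hα1 : α ≤ 1) (hl : 0 < l) (hβ : 0 < β) :
    mlKernel α (α + β) l =O[𝓟 (Ioi 0)] fun t : ℝ => t ^ (β - 1) := by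
  have hconv := isBigO_integral_mlKernel_self_mul hα hα1 hl
    (fun t _ => intervalIntegral.intervalIntegrable_rpow' (by linarith)) (by linarith)
    (isBigO_refl (fun t : ℝ => t ^ (β - 1)) (𝓟 (Ioi 0)))
  refine (isBigO_const_mul_left_iff (Real.Gamma_pos_of_pos hβ).ne').1
    (hconv.congr' ?_ .rfl)
  exact eventuallyEq_principal.2 fun t ht => integral_mlKernel_mul_sub_rpow hα hα hβ l ht

lemma mlKernel_isBigO_rpow_sub_one (hα : 0 < α) (hα1 : α ≤ 1) (hl : 0 < l) (hβ : 0 < β) :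
    mlKernel α β l =O[𝓟 (Ioi 0)] fun t : ℝ => t ^ (β - 1) := by
  refine (((isBigO_refl (fun t : ℝ => t ^ (β - 1)) (𝓟 (Ioi 0))).const_mul_left
    (1 / Real.Gamma β)).sub ((mlKernel_add_isBigO_rpow_sub_one hα hα1 hl hβ).const_mul_left
      l)).congr' ?_ .rfl
  refine eventuallyEq_principal.2 fun t ht => ?_
  rw [mlKernel_eq_sub hα β l ht, add_comm, one_div_mul_eq_div]

lemma mlKernel_isBigO_rpow (hα : 0 < α) (hα1 : α ≤ 1) (hl : 0 < l) (hβ : 0 < β) :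
    mlKernel α β l =O[𝓟 (Ioi 0)] fun t : ℝ => t ^ (β - α - 1) := by
  have hγ : 0 < β + 1 - α := by linarith
  have hexp : β + 1 - α - 1 = β - α := by ring
  have hfirst := mlKernel_add_isBigO_rpow_sub_one hα hα1 hl hγ
  have hconv := isBigO_integral_mlKernel_self_mul hα hα1 hl
    (fun t _ => intervalIntegrable_mlKernel hα hγ l 0 t) (by linarith)
    (mlKernel_isBigO_rpow_sub_one hα hα1 hl hγ)
  rw [hexp] at hfirst hconv
  rw [add_sub_cancel] at hfirst
  refine isBigO_Ioi_rpow_sub_one_of_mul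
    (((hfirst.const_mul_left (β - α)).add (hconv.const_mul_left α)).congr' ?_ .rfl)
  exact eventuallyEq_principal.2 fun t ht => (mul_mlKernel_eq hα hβ (by linarith) l ht).symm

lemma isBigO_integral_abs_mlKernel_one (hα : 0 < α) (hα1 : α ≤ 1) (hl : 0 < l) :
    (fun t => ∫ s in (0 : ℝ)..t, |mlKernel α 1 l s|) =O[𝓟 (Ioi 0)]
      fun t : ℝ => t ^ (1 - α) := by
  have htwo := mlKernel_isBigO_rpow hα hα1 hl (β := 1 + 1) (by norm_num)
  rw [show (1 : ℝ) + 1 - α - 1 = 1 - α by ring] at htwo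
  refine htwo.congr' (eventuallyEq_principal.2 fun t ht => ?_) .rfl
  rw [← integral_mlKernel hα one_pos l ht]
  exact intervalIntegral.integral_congr_Ioo_of_le (mem_Ioi.1 ht).le fun s hs =>
    (abs_of_nonneg (mlKernel_one_nonneg hα hα1 hl.le hs.1)).symm

/-- Sharper than `mlKernel_isBigO_rpow` at `β = α`, because the term of `mul_mlKernel_eq` with
coefficient `β - α` vanishes there. -/
lemma mlKernel_self_isBigO_rpow (hα : 0 < α) (hα1 : α ≤ 1) (hl : 0 < l) :
    mlKernel α α l =O[𝓟 (Ioi 0)] fun t : ℝ => t ^ (-α - 1) := by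
  have hone := mlKernel_isBigO_rpow hα hα1 hl one_pos
  have hconv := isBigO_Ioi_convolution (r := -α)
    (fun t _ => intervalIntegrable_mlKernel hα hα l 0 t)
    (fun t _ => intervalIntegrable_mlKernel hα one_pos l 0 t)
    (mlKernel_self_isBigO_rpow_neg_one hα hα1 hl) (isBigO_integral_abs_mlKernel_self hα hα1 hl)
    hone (isBigO_integral_abs_mlKernel_one hα hα1 hl) (by ring) (by ring)
  refine isBigO_Ioi_rpow_sub_one_of_mul ((hconv.const_mul_left α).congr' ?_ .rfl)
  exact eventuallyEq_principal.2 fun t ht => (mul_mlKernel_self_eq hα l ht).symm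

end Decay

theorem solution_asymptotics_general (α β lam mu : ℝ)
    (hα : 0 < α) (hα1 : α ≤ 1) (hβ : 0 < β) (hlam : 0 < lam) (hmu : 0 < mu) :
    let φ : ℝ → ℝ := fun t => ∫ τ in (0:ℝ)..t, mlKernel α α mu τ * mlKernel α β lam (t - τ)
    (φ =O[𝓟 (Ioi 0)] fun t : ℝ => t ^ (β - α - 1)) ∧
    (α = β → φ =O[𝓟 (Ioi 0)] fun t : ℝ => t ^ (-α - 1)) := by
  have hconv {q Q r : ℝ} := isBigO_Ioi_convolution (q := q) (Q := Q) (r := r)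
    (fun t _ => intervalIntegrable_mlKernel hα hα mu 0 t)
    (fun t _ => intervalIntegrable_mlKernel hα hβ lam 0 t)
    (mlKernel_self_isBigO_rpow hα hα1 hmu) (isBigO_integral_abs_mlKernel_self hα hα1 hmu)
  refine ⟨hconv (mlKernel_isBigO_rpow hα hα1 hlam hβ) (isBigO_Ioi_integral_abs (by linarith)
    (mlKernel_isBigO_rpow_sub_one hα hα1 hlam hβ)) (by ring) (by ring), ?_⟩
  rintro rfl
  exact hconv (mlKernel_self_isBigO_rpow hα hα1 hlam)
    (isBigO_integral_abs_mlKernel_self hα hα1 hlam) (by ring) (by ring)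

/-- asymptotics of the solution: for `0<α<1`, `β>0`, `λ,μ>0`, with
`φ(t) = ∫₀ᵗ τ^{α−1} E_{α,α}(−μτ^α)(t−τ)^{β−1} E_{α,β}(−λ(t−τ)^α) dτ`,
as `t → +∞` one has `φ(t) = O(t^{β−α−1})` if `α ≠ β` and `φ(t) = O(t^{−α−1})`
if `α = β`. -/
theorem solution_asymptotics (α β lam mu : ℝ)
    (hα : 0 < α) (hα1 : α < 1) (hβ : 0 < β) (hlam : 0 < lam) (hmu : 0 < mu) :
    let φ : ℝ → ℝ := fun t => ∫ τ in (0:ℝ)..t, τ ^ (α - 1) * ml α α (-mu * τ ^ α) *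
      ((t - τ) ^ (β - 1) * ml α β (-lam * (t - τ) ^ α))
    (α ≠ β → φ =O[Filter.atTop] fun t : ℝ => t ^ (β - α - 1)) ∧
    (α = β → φ =O[Filter.atTop] fun t : ℝ => t ^ (-α - 1)) := by
  have hle : (atTop : Filter ℝ) ≤ 𝓟 (Ioi 0) := le_principal_iff.2 (Ioi_mem_atTop 0)
  obtain ⟨hgen, hself⟩ := solution_asymptotics_general α β lam mu hα hα1.le hβ hlam hmu
  exact ⟨fun _ => hgen.mono hle, fun hαβ => (hself hαβ).mono hle⟩
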